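/- Fix positive integers a < b with c = a/b ∈ (0,1), and fix reals 0 < N0 ≤ Y. Then there exist a constant C > 0 and a positive integer T such that for all integers t ≥ T, with n = a·t and m = b·t, and for every vector y = (y_1,…,y_n) of reals with N0 ≤ y_1 ≤ … ≤ y_n ≤ Y, |μ1(1,n,m,y) − e·(1−c)^{(1−c)/c}·Ψ1(y)·Ψ2(y)| ≤ C/n². -/

import Mathlib

open Finset

/-- Exact `p`-th moment of the GLRT statistic under `H₀`. -/
noncomputable def mu0 (p n m : ℕ) : ℝ :=
  Real.Gamma ((m : ℝ) * n) / ((n : ℝ) ^ p * Real.Gamma ((m : ℝ) * n - p)) *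
    ∏ j ∈ Finset.range n,
      Real.Gamma ((m : ℝ) - n + 1 - p / n + j) / Real.Gamma ((m : ℝ) - n + 1 + j)

/-- Exact `p`-th moment of the GLRT statistic under `H₁`, in terms of the covariance
eigenvalues `y`. -/
noncomputable def mu1 (p n m : ℕ) (y : Fin n → ℝ) : ℝ :=
  (Nat.factorial p : ℝ) / (n : ℝ) ^ p *
    (∏ i, y i ^ (-(p : ℝ) / n)) *
    (∏ j ∈ Finset.range n,
      Real.Gamma ((m : ℝ) - n + 1 - p / n + j) / Real.Gamma ((m : ℝ) - n + 1 + j)) *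
    ∑ k ∈ Finset.Nat.antidiagonalTuple n p,
      ∏ i, Real.Gamma ((m : ℝ) - p / n + k i) * y i ^ (k i)
        / (Real.Gamma ((k i : ℝ) + 1) * Real.Gamma ((m : ℝ) - p / n))

/-- `Ψ₁(y) = ∏ y_i^{-1/n}`. -/
noncomputable def Psi1 {n : ℕ} (y : Fin n → ℝ) : ℝ := ∏ i, y i ^ (-(1 : ℝ) / n)

/-- `Ψ_{ℓ+1}(y) = (1/n) Σ y_i^ℓ` for `ℓ ≥ 1`. -/
noncomputable def PsiS {n : ℕ} (ℓ : ℕ) (y : Fin n → ℝ) : ℝ := (1 / (n : ℝ)) * ∑ i, y i ^ ℓ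

/-!
For `p = 1` only the tuples with a single entry `1` contribute, so `μ₁` factors exactly as
`A · Ψ₁ · Ψ₂`, where `A = (m - s) ∏ j < n, Γ (x + 1 - s + j) / Γ (x + 1 + j)`, `s = 1 / n` and
`x = m - n`. Expanding `log Γ` to first order in `s` at each `x + 1 + j` leaves remainders in
`[0, s² / x]`, whose sum is `O(1 / n²)`. The first-order terms `s · ψ(x + 1 + j)` sum in closed form
to `s · (m ψ(m + 1) - x ψ(x + 1) - n)`, and in `ψ(x + 1) = log x + 1 / (2 x) + O(1 / x²)` the middle
term contributes the same constant at `x` and at `m`, so that it cancels and the error is again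
`O(1 / n²)`.

Each estimate near infinity is proved in the form "the defect increases under `x ↦ x + 1` and tends
to `0`, hence it is nonpositive".
-/

open Filter Topology

lemma le_of_le_add_one_of_tendsto {f : ℝ → ℝ} {a l x : ℝ} (hf : ∀ z, a < z → f z ≤ f (z + 1))
    (hl : Tendsto f atTop (𝓝 l)) (hx : a < x) : f x ≤ l := by
  have hmono : Monotone fun k : ℕ => f (x + k) := monotone_nat_of_le_succ fun k => by
    simpa only [Nat.cast_succ, add_assoc] using hf (x + k) (by linarith [k.cast_nonneg (α := ℝ)])
  have hlim : Tendsto (fun k : ℕ => f (x + k)) atTop (𝓝 l) :=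
    hl.comp (tendsto_atTop_add_const_left _ _ tendsto_natCast_atTop_atTop)
  simpa only [Nat.cast_zero, add_zero] using hmono.ge_of_tendsto hlim 0

lemma abs_sub_le_of_abs_log_sub_log_le {u v δ : ℝ} (hu : 0 < u) (hv : 0 < v)
    (h : |Real.log u - Real.log v| ≤ δ) : |u - v| ≤ v * (δ * Real.exp δ) := by
  set d := Real.log u - Real.log v
  have hud : u = v * Real.exp d := by
    rw [Real.exp_sub, Real.exp_log hu, Real.exp_log hv, mul_div_cancel₀ _ hv.ne']
  have hexp : |Real.exp d - 1| ≤ |d| * Real.exp |d| := by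
    have hC := Complex.norm_exp_sub_sum_le_norm_mul_exp (d : ℂ) 1
    simp only [sum_range_one, pow_zero, Nat.factorial_zero, Nat.cast_one, div_one, pow_one] at hC
    exact_mod_cast hC
  calc |u - v| = v * |Real.exp d - 1| := by
        rw [hud, ← mul_sub_one, abs_mul, abs_of_pos hv]
    _ ≤ v * (δ * Real.exp δ) := by
        have hδ : 0 ≤ δ := (abs_nonneg d).trans h
        gcongr
        exact hexp.trans (by gcongr)

lemma log_add_one_sub_log_le {x : ℝ} (hx : 0 < x) :
    Real.log (x + 1) - Real.log x ≤ 1 / (2 * x) + 1 / (2 * (x + 1)) := by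
  rw [← Real.log_div (by positivity) hx.ne']
  have hlog : 0 ≤ Real.log ((x + 1) / x) :=
    Real.log_nonneg ((one_le_div hx).2 (by linarith))
  calc Real.log ((x + 1) / x) ≤ Real.sinh (Real.log ((x + 1) / x)) := Real.self_le_sinh_iff.2 hlog
    _ = 1 / (2 * x) + 1 / (2 * (x + 1)) := by
      rw [Real.sinh_log (by positivity)]
      field_simp
      ring

lemma two_div_le_log_add_one_sub_log {x : ℝ} (hx : 0 < x) :
    2 / (2 * x + 1) ≤ Real.log (x + 1) - Real.log x := by
  rw [← Real.log_div (by positivity) hx.ne']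
  calc 2 / (2 * x + 1) = 2 * (1 / x) / (1 / x + 2) := by field_simp; ring
    _ ≤ Real.log (1 + 1 / x) := Real.le_log_one_add_of_nonneg (by positivity)
    _ = Real.log ((x + 1) / x) := by congr 1; field_simp

lemma log_sub_log_sub_le {x s : ℝ} (hx : 0 < x) (hs : s < x) :
    Real.log x - Real.log (x - s) ≤ s / (x - s) := by
  have hxs : 0 < x - s := sub_pos.2 hs
  calc Real.log x - Real.log (x - s) = Real.log (x / (x - s)) :=
        (Real.log_div hx.ne' hxs.ne').symm
    _ ≤ x / (x - s) - 1 := Real.log_le_sub_one_of_pos (by positivity)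
    _ = s / (x - s) := by field_simp; ring

/-! ### The digamma function on the positive reals -/

/-- The log-Gamma function on the positive reals; elsewhere `Real.log` makes it `log |Γ x|`. -/
noncomputable def logGamma (x : ℝ) : ℝ := Real.log (Real.Gamma x)

/-- The real digamma function `ψ` on the positive reals; Mathlib has `Complex.digamma` only. -/
noncomputable def digamma (x : ℝ) : ℝ := deriv logGamma x

lemma convexOn_logGamma : ConvexOn ℝ (Set.Ioi 0) logGamma := Real.convexOn_log_Gamma

lemma logGamma_add_one {x : ℝ} (hx : 0 < x) : logGamma (x + 1) = logGamma x + Real.log x := by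
  rw [logGamma, Real.Gamma_add_one hx.ne', Real.log_mul hx.ne' (Real.Gamma_pos_of_pos hx).ne',
    add_comm, logGamma]

lemma hasDerivAt_logGamma {x : ℝ} (hx : 0 < x) : HasDerivAt logGamma (digamma x) x :=
  ((Real.differentiableOn_Gamma_Ioi.differentiableAt (Ioi_mem_nhds hx)).log
    (Real.Gamma_pos_of_pos hx).ne').hasDerivAt

lemma digamma_add_one {x : ℝ} (hx : 0 < x) : digamma (x + 1) = digamma x + 1 / x := by
  have hshift : HasDerivAt (fun z => logGamma (z + 1)) (digamma (x + 1)) x :=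
    (hasDerivAt_logGamma (by linarith)).comp_add_const x 1
  have hsum : HasDerivAt (fun z => logGamma z + Real.log z) (digamma x + 1 / x) x := by
    rw [one_div]
    exact (hasDerivAt_logGamma hx).add (Real.hasDerivAt_log hx.ne')
  refine hshift.unique (hsum.congr_of_eventuallyEq ?_)
  filter_upwards [Ioi_mem_nhds hx] with z hz using logGamma_add_one hz

lemma log_le_digamma_add_one {x : ℝ} (hx : 0 < x) : Real.log x ≤ digamma (x + 1) := by
  have hx1 : 0 < x + 1 := by linarith
  have h := convexOn_logGamma.slope_le_of_hasDerivAt hx hx1 (lt_add_one x) (hasDerivAt_logGamma hx1)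
  rwa [slope_def_field, logGamma_add_one hx, add_sub_cancel_left, add_sub_cancel_left,
    div_one] at h

lemma digamma_le_log {x : ℝ} (hx : 0 < x) : digamma x ≤ Real.log x := by
  have hx1 : 0 < x + 1 := by linarith
  have h := convexOn_logGamma.le_slope_of_hasDerivAt hx hx1 (lt_add_one x) (hasDerivAt_logGamma hx)
  rwa [slope_def_field, logGamma_add_one hx, add_sub_cancel_left, add_sub_cancel_left,
    div_one] at h

lemma tendsto_digamma_add_one_sub_log :
    Tendsto (fun x => digamma (x + 1) - Real.log x) atTop (𝓝 0) := by
  refine squeeze_zero' ?_ ?_ tendsto_inv_atTop_zero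
  · filter_upwards [eventually_gt_atTop 0] with x hx
    exact sub_nonneg.2 (log_le_digamma_add_one hx)
  · filter_upwards [eventually_gt_atTop 0] with x hx
    rw [digamma_add_one hx, one_div]
    linarith [digamma_le_log hx]

lemma digamma_add_one_le {x : ℝ} (hx : 0 < x) :
    digamma (x + 1) ≤ Real.log x + 1 / (2 * x) := by
  have hlim : Tendsto (fun z : ℝ => digamma (z + 1) - Real.log z - 1 / 2 * z⁻¹) atTop (𝓝 0) := by
    simpa using tendsto_digamma_add_one_sub_log.sub (tendsto_inv_atTop_zero.const_mul (1 / 2 : ℝ))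
  have h := le_of_le_add_one_of_tendsto (a := 0) (fun z hz => ?_) hlim hx
  · rw [one_div_mul_eq_div, inv_eq_one_div, div_div, mul_comm x] at h
    linarith
  · have hlog := log_add_one_sub_log_le hz
    rw [digamma_add_one (x := z + 1) (by linarith)]
    have hsplit : 1 / (2 * z) + 1 / (2 * (z + 1))
        = 1 / (z + 1) - 1 / 2 * (z + 1)⁻¹ + 1 / 2 * z⁻¹ := by
      field_simp
      ring
    linarith

lemma le_digamma_add_one {x : ℝ} (hx : 0 < x) :
    Real.log x + 1 / (2 * x) - 1 / (8 * x ^ 2) ≤ digamma (x + 1) := by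
  have hlim : Tendsto (fun z : ℝ => 1 / 2 * z⁻¹ - 1 / 8 * (z⁻¹ * z⁻¹)
      - (digamma (z + 1) - Real.log z)) atTop (𝓝 0) := by
    simpa using ((tendsto_inv_atTop_zero.const_mul (1 / 2 : ℝ)).sub
      ((tendsto_inv_atTop_zero.mul tendsto_inv_atTop_zero).const_mul (1 / 8 : ℝ))).sub
        tendsto_digamma_add_one_sub_log
  have h := le_of_le_add_one_of_tendsto (a := 0) (fun z hz => ?_) hlim hx
  · have hx2 : 1 / (2 * x) - 1 / (8 * x ^ 2) = 1 / 2 * x⁻¹ - 1 / 8 * (x⁻¹ * x⁻¹) := by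
      field_simp
    linarith
  · have hlog := two_div_le_log_add_one_sub_log hz
    rw [digamma_add_one (x := z + 1) (by linarith)]
    have hgap : (2 / (2 * z + 1) - 1 / (z + 1))
        - (1 / 2 * z⁻¹ - 1 / 8 * (z⁻¹ * z⁻¹))
        + (1 / 2 * (z + 1)⁻¹ - 1 / 8 * ((z + 1)⁻¹ * (z + 1)⁻¹))
        = 1 / (8 * z ^ 2 * (z + 1) ^ 2 * (2 * z + 1)) := by
      field_simp
      ring
    have hpos : 0 < 1 / (8 * z ^ 2 * (z + 1) ^ 2 * (2 * z + 1)) := by positivity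
    linarith

/-- The error in the expansion `x ψ(x + 1) ≈ x log x + 1 / 2`. -/
noncomputable def mulDigammaRemainder (x : ℝ) : ℝ :=
  x * digamma (x + 1) - (x * Real.log x + 1 / 2)

lemma mulDigammaRemainder_nonpos {x : ℝ} (hx : 0 < x) : mulDigammaRemainder x ≤ 0 := by
  refine sub_nonpos.2 ?_
  calc x * digamma (x + 1) ≤ x * (Real.log x + 1 / (2 * x)) := by
        gcongr
        exact digamma_add_one_le hx
    _ = x * Real.log x + 1 / 2 := by field_simp

lemma neg_le_mulDigammaRemainder {x : ℝ} (hx : 0 < x) :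
    -(1 / (8 * x)) ≤ mulDigammaRemainder x := by
  refine le_sub_iff_add_le'.2 ?_
  calc x * Real.log x + 1 / 2 + -(1 / (8 * x))
      = x * (Real.log x + 1 / (2 * x) - 1 / (8 * x ^ 2)) := by field_simp; ring
    _ ≤ x * digamma (x + 1) := by
        gcongr
        exact le_digamma_add_one hx

lemma sum_range_digamma {x : ℝ} (hx : -1 < x) (n : ℕ) :
    ∑ j ∈ range n, digamma (x + 1 + j)
      = (x + n) * digamma (x + n + 1) - x * digamma (x + 1) - n := by
  induction n with
  | zero => simp
  | succ n ih =>
    have hpos : 0 < x + n + 1 := by linarith [n.cast_nonneg (α := ℝ)]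
    rw [sum_range_succ, ih, Nat.cast_succ, ← add_assoc, digamma_add_one hpos,
      add_right_comm x 1 (n : ℝ)]
    field_simp
    ring

/-! ### Second-order remainder of the logarithm of Gamma -/

/-- The error in the expansion `log Γ (x + 1 - s) ≈ log Γ (x + 1) - s ψ (x + 1)`. -/
noncomputable def logGammaRemainder (s x : ℝ) : ℝ :=
  logGamma (x + 1 - s) - logGamma (x + 1) + s * digamma (x + 1)

lemma logGammaRemainder_nonneg {s x : ℝ} (hs : 0 < s) (hsx : s < x + 1) :
    0 ≤ logGammaRemainder s x := by
  have hx : 0 < x + 1 := hs.trans hsx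
  have h := convexOn_logGamma.slope_le_of_hasDerivAt (sub_pos.2 hsx) hx (sub_lt_self _ hs)
    (hasDerivAt_logGamma hx)
  rw [slope_def_field, sub_sub_cancel, div_le_iff₀ hs] at h
  rw [logGammaRemainder]
  linarith

lemma logGammaRemainder_le_mul_digamma_sub_log {s x : ℝ} (hs : 0 ≤ s) (hs1 : s ≤ 1) (hx : 0 < x) :
    logGammaRemainder s x ≤ s * (digamma (x + 1) - Real.log x) := by
  have h := convexOn_logGamma.2 (x := x) (y := x + 1) hx (Set.mem_Ioi.2 (by linarith)) hs
    (sub_nonneg.2 hs1) (add_sub_cancel _ _)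
  simp only [smul_eq_mul] at h
  rw [show s * x + (1 - s) * (x + 1) = x + 1 - s by ring, logGamma_add_one hx] at h
  rw [logGammaRemainder, logGamma_add_one hx]
  linarith

lemma tendsto_logGammaRemainder {s : ℝ} (hs : 0 < s) (hs1 : s ≤ 1) :
    Tendsto (logGammaRemainder s) atTop (𝓝 0) := by
  refine squeeze_zero' (g := fun x => s * (digamma (x + 1) - Real.log x)) ?_ ?_ ?_
  · filter_upwards [eventually_gt_atTop 0] with x hx
    exact logGammaRemainder_nonneg hs (by linarith)
  · filter_upwards [eventually_gt_atTop 0] with x hx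
    exact logGammaRemainder_le_mul_digamma_sub_log hs.le hs1 hx
  · simpa only [mul_zero] using tendsto_digamma_add_one_sub_log.const_mul s

lemma logGammaRemainder_sub_logGammaRemainder_add_one_le {s x : ℝ} (hs1 : s ≤ 1) (hx : 0 < x) :
    logGammaRemainder s x - logGammaRemainder s (x + 1) ≤ s ^ 2 * (1 / x - 1 / (x + 1)) := by
  have hxs : 0 < x + 1 - s := by linarith
  have hx1 : 0 < x + 1 := by linarith
  have hstep : logGammaRemainder s x - logGammaRemainder s (x + 1)
      = Real.log (x + 1) - Real.log (x + 1 - s) - s * (1 / (x + 1)) := by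
    rw [logGammaRemainder, logGammaRemainder, add_sub_right_comm (x + 1) 1 s,
      logGamma_add_one hxs, logGamma_add_one hx1, digamma_add_one hx1]
    ring
  calc logGammaRemainder s x - logGammaRemainder s (x + 1)
      ≤ s / (x + 1 - s) - s * (1 / (x + 1)) := by
        rw [hstep]
        linarith [log_sub_log_sub_le hx1 (by linarith : s < x + 1)]
    _ = s ^ 2 * (1 / ((x + 1) * (x + 1 - s))) := by field_simp; ring
    _ ≤ s ^ 2 * (1 / ((x + 1) * x)) := by gcongr; linarith
    _ = s ^ 2 * (1 / x - 1 / (x + 1)) := by field_simp; ring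

lemma logGammaRemainder_le {s x : ℝ} (hs : 0 < s) (hs1 : s ≤ 1) (hx : 0 < x) :
    logGammaRemainder s x ≤ s ^ 2 / x := by
  have hlim : Tendsto (fun z => logGammaRemainder s z - s ^ 2 * z⁻¹) atTop (𝓝 0) := by
    simpa using (tendsto_logGammaRemainder hs hs1).sub (tendsto_inv_atTop_zero.const_mul (s ^ 2))
  have h := le_of_le_add_one_of_tendsto (a := 0) (fun z hz => ?_) hlim hx
  · rw [div_eq_mul_inv]
    linarith
  · have hstep := logGammaRemainder_sub_logGammaRemainder_add_one_le hs1 hz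
    rw [one_div, one_div] at hstep
    linarith

/-! ### The deterministic factor of the mean -/

/-- The factor of `μ₁(1, n, m, y)` that does not depend on `y`, for real `m`. -/
noncomputable def meanCoeff (n : ℕ) (m : ℝ) : ℝ :=
  (m - 1 / n) * ∏ j ∈ range n, Real.Gamma (m - n + 1 - 1 / n + j) / Real.Gamma (m - n + 1 + j)

/-- The value `e (1 - c) ^ ((1 - c) / c)` that `meanCoeff n m` approaches when `n / m = c`. -/
noncomputable def limitCoeff (c : ℝ) : ℝ := Real.exp 1 * (1 - c) ^ ((1 - c) / c)

lemma limitCoeff_pos {c : ℝ} (hc : c < 1) : 0 < limitCoeff c :=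
  mul_pos (Real.exp_pos 1) (Real.rpow_pos_of_pos (sub_pos.2 hc) _)

lemma limitCoeff_le_exp_one {c : ℝ} (hc0 : 0 ≤ c) (hc1 : c ≤ 1) : limitCoeff c ≤ Real.exp 1 :=
  mul_le_of_le_one_right (Real.exp_pos 1).le <|
    Real.rpow_le_one (sub_nonneg.2 hc1) (by linarith) (div_nonneg (sub_nonneg.2 hc1) hc0)

lemma log_limitCoeff_div {n : ℕ} {m : ℝ} (hn : 0 < n) (hnm : n < m) :
    Real.log (limitCoeff (n / m))
      = 1 + (m - n) / n * (Real.log (m - n) - Real.log m) := by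
  have hn0 : (0 : ℝ) < n := Nat.cast_pos.2 hn
  have hm : 0 < m := hn0.trans hnm
  have hsub : 1 - n / m = (m - n) / m := by field_simp
  have hpos : 0 < (m - n) / m := div_pos (sub_pos.2 hnm) hm
  rw [limitCoeff, hsub, Real.log_mul (Real.exp_pos 1).ne' (Real.rpow_pos_of_pos hpos _).ne',
    Real.log_exp, Real.log_rpow hpos, Real.log_div (sub_pos.2 hnm).ne' hm.ne',
    div_div_div_cancel_right₀ hm.ne']

lemma one_div_natCast_le_one (n : ℕ) : 1 / (n : ℝ) ≤ 1 := by
  rw [one_div]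
  exact Nat.cast_inv_le_one n

section MeanCoeff

variable {n : ℕ} {m : ℝ}

lemma meanCoeff_pos (hn : 0 < n) (hnm : n < m) : 0 < meanCoeff n m := by
  have hs := one_div_natCast_le_one n
  have hn1 : (1 : ℝ) ≤ n := Nat.one_le_cast.2 hn
  refine mul_pos (by linarith) (prod_pos fun j _ => ?_)
  exact div_pos (Real.Gamma_pos_of_pos (by linarith [j.cast_nonneg (α := ℝ)]))
    (Real.Gamma_pos_of_pos (by linarith [j.cast_nonneg (α := ℝ)]))

lemma log_meanCoeff (hn : 0 < n) (hnm : n < m) :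
    Real.log (meanCoeff n m) = Real.log (m - 1 / n)
      - 1 / n * (m * digamma (m + 1) - (m - n) * digamma (m - n + 1) - n)
      + ∑ j ∈ range n, logGammaRemainder (1 / n) (m - n + j) := by
  have hs := one_div_natCast_le_one n
  have hn1 : (1 : ℝ) ≤ n := Nat.one_le_cast.2 hn
  have hnum (j : ℕ) : 0 < Real.Gamma (m - n + 1 - 1 / n + j) :=
    Real.Gamma_pos_of_pos (by linarith [j.cast_nonneg (α := ℝ)])
  have hden (j : ℕ) : 0 < Real.Gamma (m - n + 1 + j) :=
    Real.Gamma_pos_of_pos (by linarith [j.cast_nonneg (α := ℝ)])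
  have hratio (j : ℕ) : 0 < Real.Gamma (m - n + 1 - 1 / n + j) / Real.Gamma (m - n + 1 + j) :=
    div_pos (hnum j) (hden j)
  have hterm (j : ℕ) : Real.log (Real.Gamma (m - n + 1 - 1 / n + j) / Real.Gamma (m - n + 1 + j))
      = logGammaRemainder (1 / n) (m - n + j) - 1 / n * digamma (m - n + 1 + j) := by
    rw [Real.log_div (hnum j).ne' (hden j).ne', logGammaRemainder, logGamma, logGamma,
      add_right_comm (m - n) (j : ℝ) 1, sub_add_eq_add_sub]
    ring
  have hsum := sum_range_digamma (by linarith : -1 < m - n) n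
  rw [sub_add_cancel] at hsum
  rw [meanCoeff, Real.log_mul (by linarith) (prod_pos fun j _ => hratio j).ne',
    Real.log_prod fun j _ => (hratio j).ne', sum_congr rfl fun j _ => hterm j,
    sum_sub_distrib, ← mul_sum, hsum]
  ring

lemma sum_logGammaRemainder_nonneg (hn : 0 < n) {x : ℝ} (hx : 0 < x) :
    0 ≤ ∑ j ∈ range n, logGammaRemainder (1 / n) (x + j) := by
  have hs := one_div_natCast_le_one n
  refine sum_nonneg fun j _ => logGammaRemainder_nonneg (by positivity) ?_
  linarith [j.cast_nonneg (α := ℝ)]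

lemma sum_logGammaRemainder_le (hn : 0 < n) {x : ℝ} (hx : 0 < x) :
    ∑ j ∈ range n, logGammaRemainder (1 / n) (x + j) ≤ 1 / (n * x) := by
  have hterm : ∀ j ∈ range n, logGammaRemainder (1 / n) (x + j) ≤ (1 / n) ^ 2 / x := fun j _ =>
    (logGammaRemainder_le (by positivity) (one_div_natCast_le_one n) (by positivity)).trans <| by
      gcongr
      exact le_add_of_nonneg_right j.cast_nonneg
  calc ∑ j ∈ range n, logGammaRemainder (1 / n) (x + j)
      ≤ (range n).card • ((1 / n) ^ 2 / x : ℝ) := sum_le_card_nsmul _ _ _ hterm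
    _ = 1 / (n * x) := by
        rw [card_range, nsmul_eq_mul]
        field_simp

lemma log_meanCoeff_sub_log_limitCoeff (hn : 0 < n) (hnm : n < m) :
    Real.log (meanCoeff n m) - Real.log (limitCoeff (n / m))
      = ∑ j ∈ range n, logGammaRemainder (1 / n) (m - n + j)
        + 1 / n * (mulDigammaRemainder (m - n) - mulDigammaRemainder m)
        - (Real.log m - Real.log (m - 1 / n)) := by
  have hn0 : (n : ℝ) ≠ 0 := Nat.cast_ne_zero.2 hn.ne'
  rw [log_meanCoeff hn hnm, log_limitCoeff_div hn hnm, mulDigammaRemainder, mulDigammaRemainder]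
  field_simp
  ring

lemma abs_log_meanCoeff_sub_log_limitCoeff_le (hn : 0 < n) (hnm : n < m) :
    |Real.log (meanCoeff n m) - Real.log (limitCoeff (n / m))| ≤ 2 / (n * (m - n)) := by
  have hn1 : (1 : ℝ) ≤ n := Nat.one_le_cast.2 hn
  have hs1 := one_div_natCast_le_one n
  have hs : 0 < 1 / (n : ℝ) := by positivity
  have hx : 0 < m - n := sub_pos.2 hnm
  have hm : 0 < m := by linarith
  have hsum_nonneg := sum_logGammaRemainder_nonneg hn hx
  have hsum_le := sum_logGammaRemainder_le hn hx
  have hlog_nonneg : 0 ≤ Real.log m - Real.log (m - 1 / n) :=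
    sub_nonneg.2 (Real.log_le_log (by linarith) (by linarith))
  have hlog_le : Real.log m - Real.log (m - 1 / n) ≤ 1 / (n * (m - n)) :=
    calc Real.log m - Real.log (m - 1 / n) ≤ 1 / n / (m - 1 / n) :=
          log_sub_log_sub_le hm (by linarith)
      _ ≤ 1 / n / (m - n) := by gcongr; linarith
      _ = 1 / (n * (m - n)) := div_div _ _ _
  have hdigamma : |1 / n * (mulDigammaRemainder (m - n) - mulDigammaRemainder m)|
      ≤ 1 / (n * (m - n)) := by
    have hx_mem := neg_le_mulDigammaRemainder hx
    have hm_mem := neg_le_mulDigammaRemainder hm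
    have hx_le : 1 / (8 * (m - n)) ≤ 1 / (m - n) := by gcongr; linarith
    have hm_le : 1 / (8 * m) ≤ 1 / (m - n) := by gcongr; linarith
    rw [abs_mul, abs_of_pos hs, ← div_div, div_eq_mul_one_div (1 / (n : ℝ))]
    gcongr
    rw [abs_le]
    constructor <;> linarith [mulDigammaRemainder_nonpos hx, mulDigammaRemainder_nonpos hm]
  have htwo : 2 / (n * (m - n)) = 1 / (n * (m - n)) + 1 / (n * (m - n)) := by ring
  rw [log_meanCoeff_sub_log_limitCoeff hn hnm, htwo]
  obtain ⟨hlower, hupper⟩ := abs_le.1 hdigamma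
  exact abs_le.2 ⟨by linarith, by linarith⟩

lemma abs_meanCoeff_sub_limitCoeff_le (hn : 0 < n) (hnm : n + 1 ≤ m) :
    |meanCoeff n m - limitCoeff (n / m)| ≤ 2 * Real.exp 3 / (n * (m - n)) := by
  have hn1 : (1 : ℝ) ≤ n := Nat.one_le_cast.2 hn
  have hlt : n < m := by linarith
  have hc : n / m < 1 := (div_lt_one (by linarith)).2 hlt
  have hδ : 2 / (n * (m - n)) ≤ 2 :=
    div_le_self zero_le_two (one_le_mul_of_one_le_of_one_le hn1 (by linarith))
  calc |meanCoeff n m - limitCoeff (n / m)|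
      ≤ limitCoeff (n / m) * (2 / (n * (m - n)) * Real.exp (2 / (n * (m - n)))) :=
        abs_sub_le_of_abs_log_sub_log_le (meanCoeff_pos hn hlt) (limitCoeff_pos hc)
          (abs_log_meanCoeff_sub_log_limitCoeff_le hn hlt)
    _ ≤ Real.exp 1 * (2 / (n * (m - n)) * Real.exp 2) := by
        have : 0 < m - n := by linarith
        gcongr
        exact limitCoeff_le_exp_one (div_nonneg (by linarith) (by linarith)) hc.le
    _ = 2 * Real.exp 3 / (n * (m - n)) := by
        rw [show (3 : ℝ) = 1 + 2 by norm_num, Real.exp_add]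
        ring

end MeanCoeff

/-! ### The mean as a function of the eigenvalues -/

lemma sum_antidiagonalTuple_one {M : Type*} [AddCommMonoid M] (n : ℕ) (f : (Fin n → ℕ) → M) :
    ∑ k ∈ Nat.antidiagonalTuple n 1, f k = ∑ i, f (Pi.single i 1) := by
  have himage : Nat.antidiagonalTuple n 1 = univ.image fun i => Pi.single i 1 := by
    ext k
    have h := Finsupp.sum_eq_one_iff (Finsupp.equivFunOnFinite.symm k)
    rw [Finsupp.sum_fintype _ _ fun _ => rfl] at h
    simp_rw [Equiv.symm_apply_eq, Finsupp.equivFunOnFinite_single] at h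
    simpa [Nat.mem_antidiagonalTuple, eq_comm] using h
  rw [himage, sum_image]
  intro i _ j _ hij
  simpa [Pi.single_apply] using congrFun hij i

section Eigenvalues

variable {n : ℕ} {y : Fin n → ℝ}

lemma prod_Gamma_single {z : ℝ} (hz : 0 < z) (y : Fin n → ℝ) (i : Fin n) :
    ∏ l, Real.Gamma (z + (Pi.single i 1 : Fin n → ℕ) l) * y l ^ (Pi.single i 1 : Fin n → ℕ) l
        / (Real.Gamma (((Pi.single i 1 : Fin n → ℕ) l : ℝ) + 1) * Real.Gamma z)
      = z * y i := by
  have hΓ : Real.Gamma z ≠ 0 := (Real.Gamma_pos_of_pos hz).ne'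
  rw [prod_eq_single_of_mem i (mem_univ i)]
  · rw [Pi.single_eq_same, Nat.cast_one, Real.Gamma_add_one hz.ne', one_add_one_eq_two,
      Real.Gamma_two, pow_one]
    field_simp
  · intro l _ hl
    rw [Pi.single_eq_of_ne hl, Nat.cast_zero, add_zero, zero_add, Real.Gamma_one, pow_zero,
      mul_one, one_mul, div_self hΓ]

lemma mu1_one {m : ℕ} (hm : 1 / (n : ℝ) < m) (y : Fin n → ℝ) :
    mu1 1 n m y = meanCoeff n m * Psi1 y * PsiS 1 y := by
  rw [mu1, sum_antidiagonalTuple_one]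
  simp only [Nat.cast_one, prod_Gamma_single (sub_pos.2 hm), ← mul_sum]
  rw [meanCoeff, Psi1, PsiS]
  simp only [Nat.factorial_one, Nat.cast_one, pow_one]
  ring

lemma Psi1_nonneg (hy : ∀ i, 0 ≤ y i) : 0 ≤ Psi1 y :=
  prod_nonneg fun i _ => Real.rpow_nonneg (hy i) _

lemma PsiS_nonneg (hy : ∀ i, 0 ≤ y i) (ℓ : ℕ) : 0 ≤ PsiS ℓ y :=
  mul_nonneg (by positivity) (sum_nonneg fun i _ => pow_nonneg (hy i) ℓ)

lemma Psi1_le_inv (hn : 0 < n) {N : ℝ} (hN : 0 < N) (hy : ∀ i, N ≤ y i) : Psi1 y ≤ N⁻¹ := by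
  have hn0 : (n : ℝ) ≠ 0 := Nat.cast_ne_zero.2 hn.ne'
  calc Psi1 y ≤ ∏ _i : Fin n, N ^ (-(1 : ℝ) / n) :=
        prod_le_prod (fun i _ => Real.rpow_nonneg (hN.le.trans (hy i)) _) fun i _ =>
          Real.rpow_le_rpow_of_nonpos hN (hy i)
            (div_nonpos_of_nonpos_of_nonneg (by norm_num) n.cast_nonneg)
    _ = N⁻¹ := by
        rw [prod_const, card_univ, Fintype.card_fin, ← Real.rpow_mul_natCast hN.le,
          div_mul_cancel₀ _ hn0, Real.rpow_neg_one]

lemma PsiS_le_pow (hn : 0 < n) {Y : ℝ} (hy : ∀ i, 0 ≤ y i) (hY : ∀ i, y i ≤ Y) (ℓ : ℕ) :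
    PsiS ℓ y ≤ Y ^ ℓ := by
  have hn0 : (0 : ℝ) < n := Nat.cast_pos.2 hn
  rw [PsiS, one_div, inv_mul_le_iff₀ hn0]
  calc ∑ i, y i ^ ℓ ≤ (univ : Finset (Fin n)).card • Y ^ ℓ :=
        sum_le_card_nsmul _ _ _ fun i _ => pow_le_pow_left₀ (hy i) (hY i) ℓ
    _ = n * Y ^ ℓ := by rw [card_univ, Fintype.card_fin, nsmul_eq_mul]

lemma abs_mu1_one_sub_le {m : ℕ} (hn : 0 < n) (hnm : n < m) {N Y : ℝ} (hN : 0 < N)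
    (hNy : ∀ i, N ≤ y i) (hyY : ∀ i, y i ≤ Y) :
    |mu1 1 n m y - limitCoeff (n / m) * Psi1 y * PsiS 1 y|
      ≤ 2 * Real.exp 3 / (n * (m - n)) * (Y / N) := by
  have hnm' : (n : ℝ) + 1 ≤ m := by exact_mod_cast hnm
  have hm : 1 / (n : ℝ) < m :=
    (one_div_natCast_le_one n).trans_lt (by linarith [(Nat.cast_pos (α := ℝ)).2 hn])
  have hy (i) : 0 ≤ y i := hN.le.trans (hNy i)
  have hΨ0 : 0 ≤ Psi1 y * PsiS 1 y := mul_nonneg (Psi1_nonneg hy) (PsiS_nonneg hy 1)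
  have hΨ : Psi1 y * PsiS 1 y ≤ Y / N :=
    calc Psi1 y * PsiS 1 y ≤ N⁻¹ * Y ^ 1 :=
          mul_le_mul (Psi1_le_inv hn hN hNy) (PsiS_le_pow hn hy hyY 1) (PsiS_nonneg hy 1)
            (inv_nonneg.2 hN.le)
      _ = Y / N := by rw [pow_one, inv_mul_eq_div]
  calc |mu1 1 n m y - limitCoeff (n / m) * Psi1 y * PsiS 1 y|
      = |meanCoeff n m - limitCoeff (n / m)| * (Psi1 y * PsiS 1 y) := by
        rw [mu1_one hm, mul_assoc, mul_assoc, ← sub_mul, abs_mul, abs_of_nonneg hΨ0]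
    _ ≤ 2 * Real.exp 3 / (n * (m - n)) * (Y / N) :=
        mul_le_mul (abs_meanCoeff_sub_limitCoeff_le hn hnm') hΨ hΨ0
          ((abs_nonneg _).trans (abs_meanCoeff_sub_limitCoeff_le hn hnm'))

end Eigenvalues

theorem mu1_mean_asymptotic_general {c N0 Y : ℝ} (hc : c < 1) (hN0 : 0 < N0) (hNY : N0 ≤ Y) :
    ∃ C : ℝ, 0 < C ∧ ∀ n m : ℕ, 0 < n → n ≤ c * m →
      ∀ y : Fin n → ℝ, (∀ i, N0 ≤ y i) → (∀ i, y i ≤ Y) →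
        |mu1 1 n m y - Real.exp 1 * (1 - (n : ℝ) / m) ^ ((1 - (n : ℝ) / m) / ((n : ℝ) / m))
            * Psi1 y * PsiS 1 y| ≤ C / (n : ℝ) ^ 2 := by
  have hY : 0 < Y := hN0.trans_le hNY
  have hc' : 0 < 1 - c := sub_pos.2 hc
  refine ⟨2 * Real.exp 3 * (Y / N0) / (1 - c), by positivity, fun n m hn hnm y hNy hyY => ?_⟩
  have hn0 : (0 : ℝ) < n := Nat.cast_pos.2 hn
  have hm0 : (0 : ℝ) < m :=
    m.cast_nonneg.lt_of_ne' (right_ne_zero_of_mul (hn0.trans_le hnm).ne')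
  have hnm_lt : (n : ℝ) < m := hnm.trans_lt (mul_lt_of_lt_one_left hm0 hc)
  have hgap : (1 - c) * n ≤ m - n := by nlinarith
  calc |mu1 1 n m y - limitCoeff (n / m) * Psi1 y * PsiS 1 y|
      ≤ 2 * Real.exp 3 / (n * (m - n)) * (Y / N0) :=
        abs_mu1_one_sub_le hn (Nat.cast_lt.1 hnm_lt) hN0 hNy hyY
    _ ≤ 2 * Real.exp 3 / (n * ((1 - c) * n)) * (Y / N0) := by gcongr
    _ = 2 * Real.exp 3 * (Y / N0) / (1 - c) / (n : ℝ) ^ 2 := by field_simp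

/-- uniform asymptotic approximation of the mean of the GLRT statistic
under `H₁`: `μ1(1,n,m,y) = e (1−c)^{(1−c)/c} Ψ₁(y) Ψ₂(y) + O(1/n²)`, uniformly over
eigenvalue vectors `y` with entries in `[N0, Y]`, along `n = a·t`, `m = b·t`. -/
theorem mu1_mean_asymptotic (a b : ℕ) (ha : 0 < a) (hab : a < b)
    (N0 Y : ℝ) (hN0 : 0 < N0) (hNY : N0 ≤ Y) :
    ∃ C : ℝ, 0 < C ∧ ∃ T : ℕ, 0 < T ∧ ∀ t : ℕ, T ≤ t →
      ∀ y : Fin (a * t) → ℝ, (∀ i, N0 ≤ y i) → (∀ i, y i ≤ Y) → Monotone y →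
        |mu1 1 (a * t) (b * t) y -
            Real.exp 1 * (1 - (a : ℝ) / b) ^ ((1 - (a : ℝ) / b) / ((a : ℝ) / b))
              * Psi1 y * PsiS 1 y|
          ≤ C / ((a * t : ℕ) : ℝ) ^ 2 := by
  have hb : (0 : ℝ) < b := Nat.cast_pos.2 (ha.trans hab)
  obtain ⟨C, hC, h⟩ :=
    mu1_mean_asymptotic_general ((div_lt_one hb).2 (Nat.cast_lt.2 hab)) hN0 hNY
  refine ⟨C, hC, 1, one_pos, fun t ht y hNy hyY _ => ?_⟩
  have ht0 : (t : ℝ) ≠ 0 := Nat.cast_ne_zero.2 (Nat.one_le_iff_ne_zero.1 ht)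
  have hle : ((a * t : ℕ) : ℝ) ≤ a / b * (b * t : ℕ) := by
    rw [Nat.cast_mul, Nat.cast_mul, ← mul_assoc, div_mul_cancel₀ _ hb.ne']
  simpa only [Nat.cast_mul, mul_div_mul_right _ _ ht0] using
    h (a * t) (b * t) (Nat.mul_pos ha ht) hle y hNy hyY
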